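/- arXiv:2106.10913 — 3 statements merged into one kernel-verified Lean document; each statement's English description precedes it below -/
import Mathlib

section
/- Let A ∈ ℝ^{n×n} be symmetric positive definite and let B^s ∈ ℝ^{n^s×n^s}, s = 1,…,N, be symmetric matrices with A = Σ_{s=1}^N (R^s)^T B^s R^s. For each s suppose B^s = A_+^s − A_-^s where A_+^s and A_-^s are symmetric positive semi-definite with A_+^s A_-^s = 0, and suppose A_+^s = V_+^s Λ_+^s (V_+^s)^T where V_+^s ∈ ℝ^{n^s×n_+^s} has orthonormal columns and Λ_+^s ∈ ℝ^{n_+^s×n_+^s} is diagonal positive definite (so that the Moore–Penrose pseudo-inverse of A_+^s equals V_+^s (Λ_+^s)^{-1} (V_+^s)^T). Let D := (Σ_{t=1}^N (R^t)^T R^t)^{-1} and D^s := R^s D (R^s)^T. Then the Neumann–Neumann-type preconditioner H^NN := Σ_{s=1}^N (R^s)^T D^s V_+^s (Λ_+^s)^{-1} (V_+^s)^T D^s R^s is symmetric positive definite. -/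
open Matrix

/-- The boolean restriction matrix `R^s` whose rows are the canonical basis
vectors `e_i^T` for `i ∈ Ω`. -/
noncomputable def restrict {n : ℕ} (Ω : Finset (Fin n)) :
    Matrix {i : Fin n // i ∈ Ω} (Fin n) ℝ :=
  Matrix.of fun i j => if (i : Fin n) = j then 1 else 0

lemma restrict_mulVec' {n : ℕ} (Ω : Finset (Fin n)) (x : Fin n → ℝ) (i : {i : Fin n // i ∈ Ω}) :
    (restrict Ω *ᵥ x) i = x i := by
  simp [restrict, Matrix.mulVec, dotProduct]

lemma restrict_gram {n : ℕ} (Ω : Finset (Fin n)) :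
    (restrict Ω)ᵀ * restrict Ω = Matrix.diagonal (fun i => if i ∈ Ω then (1 : ℝ) else 0) := by
  ext i j
  simp only [restrict, Matrix.mul_apply, Matrix.transpose_apply, Matrix.of_apply,
    Matrix.diagonal_apply]
  rw [Finset.sum_coe_sort Ω (fun k => (if k = i then (1 : ℝ) else 0) * (if k = j then 1 else 0))]
  by_cases hij : i = j
  · subst hij
    simp
  · simp [hij]
    exact fun _ h => hij h.symm

lemma restrict_diag {n : ℕ} (Ω : Finset (Fin n)) (c : Fin n → ℝ) :
    restrict Ω * Matrix.diagonal c * (restrict Ω)ᵀ =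
      Matrix.diagonal (fun i : {i : Fin n // i ∈ Ω} => c i) := by
  ext i j
  rw [Matrix.mul_apply]
  simp only [restrict, Matrix.mul_diagonal, Matrix.transpose_apply, Matrix.of_apply,
    Matrix.diagonal_apply]
  by_cases hij : i = j
  · subst hij
    simp
  · have : (j : Fin n) ≠ i := fun h => hij (Subtype.ext h.symm)
    simp [hij, this]

theorem stmt4 {n N : ℕ} (hn : 0 < n) (hN : 0 < N)
    (Ω : Fin N → Finset (Fin n))
    (hcover : ∀ i : Fin n, ∃ s, i ∈ Ω s)
    (A : Matrix (Fin n) (Fin n) ℝ) (hA : A.PosDef)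
    (Bs Ap Am : (s : Fin N) → Matrix {i : Fin n // i ∈ Ω s} {i : Fin n // i ∈ Ω s} ℝ)
    (hBsym : ∀ s, (Bs s).IsSymm)
    (hsplit : A = ∑ s, (restrict (Ω s))ᵀ * Bs s * restrict (Ω s))
    (hdiff : ∀ s, Bs s = Ap s - Am s)
    (hAp : ∀ s, (Ap s).PosSemidef)
    (hAm : ∀ s, (Am s).PosSemidef)
    (hApAm : ∀ s, Ap s * Am s = 0)
    (np : Fin N → ℕ)
    (V : (s : Fin N) → Matrix {i : Fin n // i ∈ Ω s} (Fin (np s)) ℝ)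
    (d : (s : Fin N) → Fin (np s) → ℝ)
    (hd : ∀ s k, 0 < d s k)
    (hVortho : ∀ s, (V s)ᵀ * V s = 1)
    (hApV : ∀ s, Ap s = V s * Matrix.diagonal (d s) * (V s)ᵀ)
    (D : Matrix (Fin n) (Fin n) ℝ)
    (hD : D = (∑ t, (restrict (Ω t))ᵀ * restrict (Ω t))⁻¹)
    (Ds : (s : Fin N) → Matrix {i : Fin n // i ∈ Ω s} {i : Fin n // i ∈ Ω s} ℝ)
    (hDs : ∀ s, Ds s = restrict (Ω s) * D * (restrict (Ω s))ᵀ) :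
    (∑ s, (restrict (Ω s))ᵀ * Ds s * V s * Matrix.diagonal (fun k => (d s k)⁻¹) *
      (V s)ᵀ * Ds s * restrict (Ω s)).PosDef := by
  classical
  set c : Fin n → ℝ := fun i => ∑ t, if i ∈ Ω t then (1 : ℝ) else 0 with hc
  have hcpos : ∀ i, 0 < c i := by
    intro i
    obtain ⟨s, hs⟩ := hcover i
    refine Finset.sum_pos' (fun t _ => by split_ifs <;> norm_num) ⟨s, Finset.mem_univ _, ?_⟩
    simp [hs]
  have hM : (∑ t, (restrict (Ω t))ᵀ * restrict (Ω t)) = Matrix.diagonal c := by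
    ext i j
    rw [Matrix.sum_apply]
    simp only [restrict_gram, Matrix.diagonal_apply, hc]
    by_cases hij : i = j <;> simp [hij]
  have hD' : D = Matrix.diagonal (fun i => (c i)⁻¹) := by
    rw [hD, hM]
    apply Matrix.inv_eq_left_inv
    rw [Matrix.diagonal_mul_diagonal, ← Matrix.diagonal_one]
    congr 1
    ext i
    exact inv_mul_cancel₀ (hcpos i).ne'
  have hDs' : ∀ s, Ds s = Matrix.diagonal (fun i : {i : Fin n // i ∈ Ω s} => (c i)⁻¹) := by
    intro s
    rw [hDs, hD', restrict_diag]
  have hform : ∀ s, (restrict (Ω s))ᵀ * Ds s * V s * Matrix.diagonal (fun k => (d s k)⁻¹) *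
      (V s)ᵀ * Ds s * restrict (Ω s) = ((V s)ᵀ * Ds s * restrict (Ω s))ᴴ *
        Matrix.diagonal (fun k => (d s k)⁻¹) * ((V s)ᵀ * Ds s * restrict (Ω s)) := by
    intro s
    rw [Matrix.conjTranspose_eq_transpose_of_trivial]
    simp only [Matrix.transpose_mul, Matrix.transpose_transpose, hDs', Matrix.diagonal_transpose,
      Matrix.mul_assoc]
  simp only [hform]
  have hdiagP : ∀ s, (Matrix.diagonal (fun k => (d s k)⁻¹)).PosDef := fun s =>
    Matrix.PosDef.diagonal (fun k => inv_pos.2 (hd s k))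
  have hpsd : ∀ s, (((V s)ᵀ * Ds s * restrict (Ω s))ᴴ *
        Matrix.diagonal (fun k => (d s k)⁻¹) * ((V s)ᵀ * Ds s * restrict (Ω s))).PosSemidef :=
    fun s => (hdiagP s).posSemidef.conjTranspose_mul_mul_same _
  have hsum := Matrix.posSemidef_sum Finset.univ (fun s _ => hpsd s)
  refine Matrix.PosDef.of_dotProduct_mulVec_pos hsum.isHermitian ?_
  intro x hx
  refine lt_of_le_of_ne (hsum.dotProduct_mulVec_nonneg x) ?_
  intro h0
  apply hx
  rw [Matrix.sum_mulVec, dotProduct_sum] at h0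
  have hz := (Finset.sum_eq_zero_iff_of_nonneg
    (fun s _ => (hpsd s).dotProduct_mulVec_nonneg x)).1 h0.symm
  have hW : ∀ s, ((V s)ᵀ * Ds s * restrict (Ω s)) *ᵥ x = 0 := by
    intro s
    by_contra hne
    have h1 := (hdiagP s).dotProduct_mulVec_pos hne
    have h2 := hz s (Finset.mem_univ _)
    rw [← Matrix.mulVec_mulVec, ← Matrix.mulVec_mulVec, Matrix.dotProduct_mulVec,
      ← Matrix.star_mulVec] at h2
    exact h1.ne' h2
  set y : Fin n → ℝ := fun i => (c i)⁻¹ * x i with hy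
  have hy0 : y = 0 := by
    by_contra hne
    have h1 := hA.dotProduct_mulVec_pos hne
    rw [hsplit, Matrix.sum_mulVec, dotProduct_sum] at h1
    refine absurd h1 (not_lt.2 (Finset.sum_nonpos fun s _ => ?_))
    have hRy : Ds s *ᵥ (restrict (Ω s) *ᵥ x) = restrict (Ω s) *ᵥ y := by
      ext i
      rw [hDs', Matrix.mulVec_diagonal, restrict_mulVec', restrict_mulVec']
    have hAp0 : Ap s *ᵥ (restrict (Ω s) *ᵥ y) = 0 := by
      have h := hW s
      rw [← Matrix.mulVec_mulVec, ← Matrix.mulVec_mulVec, hRy] at h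
      rw [hApV, ← Matrix.mulVec_mulVec, h, Matrix.mulVec_zero]
    have h3 := (hAm s).dotProduct_mulVec_nonneg (restrict (Ω s) *ᵥ y)
    rw [← Matrix.mulVec_mulVec, ← Matrix.mulVec_mulVec, hdiff, Matrix.sub_mulVec, hAp0,
      Matrix.dotProduct_mulVec, ← Matrix.conjTranspose_eq_transpose_of_trivial,
      ← Matrix.star_mulVec, zero_sub, dotProduct_neg]
    linarith
  ext i
  have := congrFun hy0 i
  simpa [hy, (hcpos i).ne'] using this
end

section
/- Let A_+ ∈ ℝ^{n×n} be symmetric positive definite, let Λ_- ∈ ℝ^{n_-×n_-} be diagonal positive definite, let V_- ∈ ℝ^{n×n_-} have orthonormal columns, and suppose A := A_+ − V_- Λ_- (V_-)^T is symmetric positive definite. Let W ∈ ℝ^{n×n_-} satisfy range(W) = range(A_+^{-1} V_-), define Π_3 := I − W (W^T A W)^{-1} W^T A, and let H_2 ∈ ℝ^{n×n} be symmetric positive definite such that every eigenvalue of H_2 A_+ lies in [λ_min, λ_max] with 0 < λ_min ≤ λ_max. Define the hybrid AWG preconditioner H_{3,hyb} := Π_3 H_2 (Π_3)^T + W (W^T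 A W)^{-1} W^T. Then every eigenvalue λ of H_{3,hyb} A satisfies min(1, λ_min) ≤ λ ≤ max(1, λ_max). -/
open Matrix

lemma aux_lower {n : ℕ} (S : Matrix (Fin n) (Fin n) ℝ) (hS : S.IsHermitian) (a : ℝ)
    (h : ∀ (m : ℝ) (v : Fin n → ℝ), v ≠ 0 → S *ᵥ v = m • v → a ≤ m) (v : Fin n → ℝ) :
    a * (v ⬝ᵥ v) ≤ v ⬝ᵥ (S *ᵥ v) := by
  have hT : (S - a • (1 : Matrix (Fin n) (Fin n) ℝ)).IsHermitian := by
    apply hS.sub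
    simp [Matrix.IsHermitian, Matrix.conjTranspose_smul]
  have hp : (S - a • (1 : Matrix (Fin n) (Fin n) ℝ)).PosSemidef := by
    rw [hT.posSemidef_iff_eigenvalues_nonneg]
    intro i
    have h1 := hT.mulVec_eigenvectorBasis i
    have h2 : (hT.eigenvectorBasis i).ofLp ≠ 0 := by
      intro h0
      exact hT.eigenvectorBasis.orthonormal.ne_zero i (by ext j; exact congrFun h0 j)
    have h3 := h (hT.eigenvalues i + a) _ h2 (by
      rw [Matrix.sub_mulVec, Matrix.smul_mulVec, Matrix.one_mulVec] at h1
      rw [add_smul, ← h1]; simp)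
    simp only [Pi.zero_apply]
    linarith
  have := hp.dotProduct_mulVec_nonneg v
  rw [Matrix.sub_mulVec, Matrix.smul_mulVec, Matrix.one_mulVec, dotProduct_sub,
    dotProduct_smul] at this
  simp only [star_trivial, smul_eq_mul] at this
  linarith

open scoped MatrixOrder Matrix.Norms.L2Operator in
lemma aux_rayleigh {n : ℕ} (P H : Matrix (Fin n) (Fin n) ℝ) (hP : P.PosDef) (hH : H.PosDef)
    (lmin lmax : ℝ) (hlmin : 0 < lmin)
    (hspec : ∀ (lam : ℝ) (x : Fin n → ℝ), x ≠ 0 →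
      (H * P) *ᵥ x = lam • x → lmin ≤ lam ∧ lam ≤ lmax) (x : Fin n → ℝ) :
    lmin * (x ⬝ᵥ (P *ᵥ x)) ≤ (P *ᵥ x) ⬝ᵥ (H *ᵥ (P *ᵥ x)) ∧
    (P *ᵥ x) ⬝ᵥ (H *ᵥ (P *ᵥ x)) ≤ lmax * (x ⬝ᵥ (P *ᵥ x)) := by
  obtain ⟨B, hB⟩ : ∃ B : Matrix (Fin n) (Fin n) ℝ, P = Bᵀ * B := by
    obtain ⟨B, hB⟩ := CStarAlgebra.nonneg_iff_eq_star_mul_self.mp hP.posSemidef.nonneg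
    exact ⟨B, by simpa [Matrix.star_eq_conjTranspose] using hB⟩
  have hHt : Hᵀ = H := by simpa [Matrix.IsHermitian] using hH.isHermitian
  have hBdet : IsUnit Bᵀ.det := by
    have := hP.det_pos
    rw [hB, det_mul] at this
    exact (left_ne_zero_of_mul this.ne').isUnit
  have hS : (B * H * Bᵀ).IsHermitian := by
    simp [Matrix.IsHermitian, Matrix.transpose_mul, hHt, Matrix.mul_assoc]
  have key : ∀ (m : ℝ) (v : Fin n → ℝ), v ≠ 0 → (B * H * Bᵀ) *ᵥ v = m • v →
      lmin ≤ m ∧ m ≤ lmax := by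
    intro m v hv he
    apply hspec m ((H * Bᵀ) *ᵥ v)
    · intro h0
      apply hv
      have hu : IsUnit (H * Bᵀ).det := by
        rw [det_mul]; exact (hH.det_pos.ne'.isUnit).mul hBdet
      exact Matrix.eq_zero_of_mulVec_eq_zero hu.ne_zero h0
    · rw [hB, Matrix.mulVec_mulVec, ← Matrix.mulVec_smul, ← he, Matrix.mulVec_mulVec]
      simp only [Matrix.mul_assoc]
  have e1 : x ⬝ᵥ (P *ᵥ x) = (B *ᵥ x) ⬝ᵥ (B *ᵥ x) := by
    rw [hB, ← Matrix.mulVec_mulVec, Matrix.dotProduct_mulVec, Matrix.vecMul_transpose]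
  have e2 : (P *ᵥ x) ⬝ᵥ (H *ᵥ (P *ᵥ x)) = (B *ᵥ x) ⬝ᵥ ((B * H * Bᵀ) *ᵥ (B *ᵥ x)) := by
    rw [hB, ← Matrix.mulVec_mulVec, ← Matrix.mulVec_mulVec, ← Matrix.mulVec_mulVec,
      Matrix.dotProduct_mulVec (B *ᵥ x) B, ← Matrix.mulVec_transpose B]
  rw [e1, e2]
  refine ⟨aux_lower _ hS _ (fun m v hv he => (key m v hv he).1) _, ?_⟩
  have := aux_lower (-(B * H * Bᵀ)) hS.neg (-lmax) (fun m v hv he => by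
    have := (key (-m) v hv (by rw [neg_smul, ← he, Matrix.neg_mulVec, neg_neg])).2
    linarith) (B *ᵥ x)
  rw [Matrix.neg_mulVec, dotProduct_neg] at this
  linarith

theorem stmt13 {n nm : ℕ} (hn : 0 < n) (hnm : 0 < nm) (hle : nm ≤ n)
    (Aplus : Matrix (Fin n) (Fin n) ℝ) (hAplus : Aplus.PosDef)
    (d : Fin nm → ℝ) (hd : ∀ k, 0 < d k)
    (V : Matrix (Fin n) (Fin nm) ℝ) (hVortho : Vᵀ * V = 1)
    (A : Matrix (Fin n) (Fin n) ℝ)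
    (hA : A = Aplus - V * Matrix.diagonal d * Vᵀ)
    (hApos : A.PosDef)
    (W : Matrix (Fin n) (Fin nm) ℝ)
    (hW : LinearMap.range W.mulVecLin = LinearMap.range (Aplus⁻¹ * V).mulVecLin)
    (P3 : Matrix (Fin n) (Fin n) ℝ)
    (hP3 : P3 = 1 - W * (Wᵀ * A * W)⁻¹ * Wᵀ * A)
    (H2 : Matrix (Fin n) (Fin n) ℝ) (hH2 : H2.PosDef)
    (lmin lmax : ℝ) (hlmin : 0 < lmin) (hlml : lmin ≤ lmax)
    (hspec : ∀ (lam : ℝ) (x : Fin n → ℝ), x ≠ 0 →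
      (H2 * Aplus) *ᵥ x = lam • x → lmin ≤ lam ∧ lam ≤ lmax)
    (H3hyb : Matrix (Fin n) (Fin n) ℝ)
    (hH3hyb : H3hyb = P3 * H2 * P3ᵀ + W * (Wᵀ * A * W)⁻¹ * Wᵀ) :
    ∀ (lam : ℝ) (x : Fin n → ℝ), x ≠ 0 → (H3hyb * A) *ᵥ x = lam • x →
      min 1 lmin ≤ lam ∧ lam ≤ max 1 lmax := by
  intro lam x hx hev
  have hAt : Aᵀ = A := by simpa [Matrix.IsHermitian] using hApos.isHermitian
  have hPt : Aplusᵀ = Aplus := by simpa [Matrix.IsHermitian] using hAplus.isHermitian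
  have hPu : IsUnit Aplus.det := hAplus.det_pos.ne'.isUnit
  -- W is injective
  have hinjV : Function.Injective (Aplus⁻¹ * V).mulVecLin := by
    apply Function.LeftInverse.injective (g := (Vᵀ * Aplus).mulVecLin)
    intro z
    rw [Matrix.mulVecLin_apply, Matrix.mulVecLin_apply, Matrix.mulVec_mulVec, Matrix.mul_assoc,
      Matrix.mul_nonsing_inv_cancel_left _ _ hPu, hVortho, Matrix.one_mulVec]
  have hinjW : Function.Injective W.mulVecLin := by
    have h1 := LinearMap.finrank_range_of_inj hinjV
    rw [← hW] at h1
    have h2 := W.mulVecLin.finrank_range_add_finrank_ker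
    rw [← LinearMap.ker_eq_bot, ← Submodule.finrank_eq_zero (R := ℝ)]
    omega
  have hM : (Wᵀ * A * W).PosDef := by
    have := hApos.conjTranspose_mul_mul_same (B := W) hinjW
    simpa using this
  have hMu : IsUnit (Wᵀ * A * W).det := hM.det_pos.ne'.isUnit
  by_cases hl : lam = 1
  · subst hl
    exact ⟨min_le_left _ _, le_max_left _ _⟩
  set K := (Wᵀ * A * W)⁻¹ with hK
  have hMK : (Wᵀ * A * W) * K = 1 := Matrix.mul_nonsing_inv _ hMu
  have hKt : Kᵀ = K := by
    rw [hK, Matrix.transpose_nonsing_inv]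
    simp [Matrix.transpose_mul, hAt, Matrix.mul_assoc]
  have hWP : Wᵀ * A * P3 = 0 := by
    have : Wᵀ * A * P3 = Wᵀ * A - ((Wᵀ * A * W) * K) * (Wᵀ * A) := by
      rw [hP3, Matrix.mul_sub, Matrix.mul_one]; simp only [Matrix.mul_assoc]
    rw [this, hMK]; simp
  have hWH : Wᵀ * A * (H3hyb * A) = Wᵀ * A := by
    have : Wᵀ * A * (H3hyb * A) = (Wᵀ * A * P3) * (H2 * P3ᵀ * A)
        + ((Wᵀ * A * W) * K) * (Wᵀ * A) := by
      rw [hH3hyb]; simp only [Matrix.mul_assoc, Matrix.mul_add, Matrix.add_mul]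
    rw [this, hWP, hMK]; simp
  have hWx : (Wᵀ * A) *ᵥ x = 0 := by
    have h1 := congrArg (fun y => (Wᵀ * A) *ᵥ y) hev
    simp only [Matrix.mulVec_mulVec, hWH, Matrix.mulVec_smul] at h1
    have h2 : (1 - lam) • ((Wᵀ * A) *ᵥ x) = 0 := by
      rw [sub_smul, one_smul, ← h1, sub_self]
    rcases smul_eq_zero.1 h2 with h | h
    · exact absurd (by linarith) hl
    · exact h
  have hVx0 : (Vᵀ * Aplus⁻¹ * A) *ᵥ x = 0 := by
    apply dotProduct_eq_zero
    intro e
    have hmem : (Aplus⁻¹ * V).mulVecLin e ∈ LinearMap.range W.mulVecLin := by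
      rw [hW]; exact ⟨e, rfl⟩
    obtain ⟨c, hc⟩ := hmem
    rw [Matrix.mulVecLin_apply, Matrix.mulVecLin_apply] at hc
    have ht : Vᵀ * Aplus⁻¹ = (Aplus⁻¹ * V)ᵀ := by
      rw [Matrix.transpose_mul, Matrix.transpose_nonsing_inv, hPt]
    rw [dotProduct_comm, ht, ← Matrix.mulVec_mulVec, Matrix.dotProduct_mulVec,
      Matrix.vecMul_transpose, ← hc, ← Matrix.vecMul_transpose, ← Matrix.dotProduct_mulVec,
      Matrix.mulVec_mulVec, hWx, dotProduct_zero]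
  have hVx : Vᵀ *ᵥ x = 0 := by
    set y := (Aplus⁻¹ * V * diagonal d) *ᵥ (Vᵀ *ᵥ x) with hy
    have h1 : Vᵀ *ᵥ y = Vᵀ *ᵥ x := by
      have : Vᵀ * Aplus⁻¹ * A = Vᵀ - Vᵀ * (Aplus⁻¹ * V * diagonal d) * Vᵀ := by
        rw [hA, Matrix.mul_sub, Matrix.nonsing_inv_mul_cancel_right _ _ hPu]
        simp only [Matrix.mul_assoc]
      rw [this, Matrix.sub_mulVec, sub_eq_zero] at hVx0
      rw [hVx0, hy]; simp only [Matrix.mulVec_mulVec, Matrix.mul_assoc]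
    have h2 : A *ᵥ y = 0 := by
      rw [hA, Matrix.sub_mulVec, ← Matrix.mulVec_mulVec, h1, hy, sub_eq_zero,
        Matrix.mulVec_mulVec, Matrix.mul_assoc Aplus⁻¹,
        Matrix.mul_nonsing_inv_cancel_left _ _ hPu]
    have h3 : y = 0 := Matrix.eq_zero_of_mulVec_eq_zero hApos.det_pos.ne' h2
    rw [← h1, h3, Matrix.mulVec_zero]
  have hAx : A *ᵥ x = Aplus *ᵥ x := by
    rw [hA, Matrix.sub_mulVec, ← Matrix.mulVec_mulVec, hVx]; simp
  have hPA : P3ᵀ *ᵥ (A *ᵥ x) = A *ᵥ x := by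
    have : P3ᵀ * A = A - A * W * K * (Wᵀ * A) := by
      rw [hP3]
      simp only [Matrix.transpose_sub, Matrix.transpose_one, Matrix.transpose_mul, hAt, hKt,
        Matrix.transpose_transpose, Matrix.sub_mul, Matrix.one_mul, Matrix.mul_assoc]
    rw [Matrix.mulVec_mulVec, this, Matrix.sub_mulVec, ← Matrix.mulVec_mulVec, hWx]; simp
  have hev2 : P3 *ᵥ (H2 *ᵥ (A *ᵥ x)) = lam • x := by
    have : H3hyb * A = P3 * H2 * (P3ᵀ * A) + W * K * (Wᵀ * A) := by
      rw [hH3hyb]; simp only [Matrix.add_mul, Matrix.mul_assoc]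
    rw [← hev, this, Matrix.add_mulVec, ← Matrix.mulVec_mulVec _ (W * K), hWx,
      Matrix.mulVec_zero, add_zero, ← Matrix.mulVec_mulVec, ← Matrix.mulVec_mulVec x, hPA,
      Matrix.mulVec_mulVec]
  have hq : (A *ᵥ x) ⬝ᵥ (H2 *ᵥ (A *ᵥ x)) = lam * (x ⬝ᵥ (A *ᵥ x)) := by
    have h1 := congrArg (fun y => (A *ᵥ x) ⬝ᵥ y) hev2
    simp only [dotProduct_smul, smul_eq_mul] at h1
    rw [Matrix.dotProduct_mulVec, ← Matrix.mulVec_transpose, hPA, dotProduct_comm _ x] at h1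
    exact h1
  have hpos : 0 < x ⬝ᵥ (A *ᵥ x) := by
    have := hApos.dotProduct_mulVec_pos hx
    simpa using this
  obtain ⟨r1, r2⟩ := aux_rayleigh Aplus H2 hAplus hH2 lmin lmax hlmin hspec x
  rw [← hAx, hq] at r1 r2
  exact ⟨(min_le_right _ _).trans (le_of_mul_le_mul_right r1 hpos),
    (le_of_mul_le_mul_right r2 hpos).trans (le_max_right _ _)⟩
end

section
/- Let A_+ ∈ ℝ^{n×n} be symmetric positive definite, let Λ_- ∈ ℝ^{n_-×n_-} be diagonal positive definite, let V_- ∈ ℝ^{n×n_-} have orthonormal columns, and suppose A := A_+ − V_- Λ_- (V_-)^T is symmetric positive definite. Let W ∈ ℝ^{n×n_-} satisfy range(W) = range(A_+^{-1} V_-), and let H_2 ∈ ℝ^{n×n} be symmetric positive definite such that every eigenvalue of H_2 A_+ lies in [λ_min, λ_max] with 0 < λ_min ≤ λ_max. Define the additive AWG preconditioner H_{3,ad} := H_2 + W (W^T A W)^{-1} W^T. Then every eigenvalue λ of H_{3,ad} A satisfies min(1, λ_min) ≤ λ ≤ λ_max + 1. -/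
open Matrix

open scoped MatrixOrder

lemma aux_psd {n : ℕ} (M : Matrix (Fin n) (Fin n) ℝ) (hM : M.IsHermitian)
    (h : ∀ (lam : ℝ) (x : Fin n → ℝ), x ≠ 0 → M *ᵥ x = lam • x → 0 ≤ lam) (u : Fin n → ℝ) :
    0 ≤ u ⬝ᵥ (M *ᵥ u) := by
  have hp : M.PosSemidef := by
    rw [hM.posSemidef_iff_eigenvalues_nonneg]
    intro i
    refine h _ (hM.eigenvectorBasis i).ofLp ?_ (hM.mulVec_eigenvectorBasis i)
    intro h0
    apply hM.eigenvectorBasis.toBasis.ne_zero i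
    ext j
    simpa using congrFun h0 j
  simpa using hp.dotProduct_mulVec_nonneg u

lemma aux_bounds {n : ℕ} (B H : Matrix (Fin n) (Fin n) ℝ) (hB : B.PosDef) (hH : H.PosDef)
    (l m : ℝ)
    (hspec : ∀ (lam : ℝ) (x : Fin n → ℝ), x ≠ 0 →
      (H * B) *ᵥ x = lam • x → l ≤ lam ∧ lam ≤ m) (z : Fin n → ℝ) :
    l * (z ⬝ᵥ (B *ᵥ z)) ≤ (B *ᵥ z) ⬝ᵥ (H *ᵥ (B *ᵥ z)) ∧
    (B *ᵥ z) ⬝ᵥ (H *ᵥ (B *ᵥ z)) ≤ m * (z ⬝ᵥ (B *ᵥ z)) := by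
  obtain ⟨C, hC⟩ := CStarAlgebra.nonneg_iff_eq_star_mul_self.mp hB.posSemidef.nonneg
  rw [star_eq_conjTranspose, conjTranspose_eq_transpose_of_trivial] at hC
  have hdet : IsUnit C.det := by
    have h1 := hB.det_pos
    rw [hC, det_mul, det_transpose] at h1
    rw [isUnit_iff_ne_zero]
    intro h0
    simp [h0] at h1
  have hHt : Hᵀ = H := by
    have h0 := hH.isHermitian.eq
    rwa [conjTranspose_eq_transpose_of_trivial] at h0
  set M := C * H * Cᵀ with hM
  have hMt : Mᵀ = M := by simp [hM, transpose_mul, hHt, Matrix.mul_assoc]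
  have key : ∀ (lam : ℝ) (u : Fin n → ℝ), u ≠ 0 → M *ᵥ u = lam • u → l ≤ lam ∧ lam ≤ m := by
    intro lam u hu h
    have hCu : C *ᵥ (C⁻¹ *ᵥ u) = u := by simp [mulVec_mulVec, mul_nonsing_inv C hdet]
    refine hspec lam (C⁻¹ *ᵥ u) ?_ ?_
    · intro h0
      rw [h0] at hCu
      exact hu (by simpa using hCu.symm)
    · have h2 : (H * B) *ᵥ (C⁻¹ *ᵥ u) = (H * Cᵀ) *ᵥ u := by
        rw [hC, ← Matrix.mul_assoc, ← mulVec_mulVec, hCu]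
      have h3 : (H * Cᵀ) *ᵥ u = C⁻¹ *ᵥ (M *ᵥ u) := by
        rw [mulVec_mulVec, hM, Matrix.mul_assoc, ← Matrix.mul_assoc C⁻¹, nonsing_inv_mul C hdet,
          Matrix.one_mul]
      rw [h2, h3, h, mulVec_smul]
  have e1 : z ⬝ᵥ (B *ᵥ z) = (C *ᵥ z) ⬝ᵥ (C *ᵥ z) := by
    rw [hC, ← mulVec_mulVec, dotProduct_mulVec, vecMul_transpose]
  have e2 : (B *ᵥ z) ⬝ᵥ (H *ᵥ (B *ᵥ z)) = (C *ᵥ z) ⬝ᵥ (M *ᵥ (C *ᵥ z)) := by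
    rw [hC, hM, ← mulVec_mulVec z Cᵀ C, ← mulVec_mulVec, ← mulVec_mulVec,
      dotProduct_mulVec (C *ᵥ z) C, mulVec_transpose C]
  rw [e1, e2]
  constructor
  · have := aux_psd (M - l • (1 : Matrix (Fin n) (Fin n) ℝ))
      (by simp [IsHermitian, hMt]) (by
        intro lam x hx h
        rw [sub_mulVec, smul_mulVec, one_mulVec] at h
        have := (key (lam + l) x hx (by rw [add_smul, ← h]; abel)).1
        linarith) (C *ᵥ z)
    rw [sub_mulVec, smul_mulVec, one_mulVec, dotProduct_sub, dotProduct_smul, smul_eq_mul] at this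
    linarith
  · have := aux_psd (m • (1 : Matrix (Fin n) (Fin n) ℝ) - M)
      (by simp [IsHermitian, hMt]) (by
        intro lam x hx h
        rw [sub_mulVec, smul_mulVec, one_mulVec] at h
        have := (key (m - lam) x hx (by rw [sub_smul, ← h]; abel)).2
        linarith) (C *ᵥ z)
    rw [sub_mulVec, smul_mulVec, one_mulVec, dotProduct_sub, dotProduct_smul, smul_eq_mul] at this
    linarith

theorem stmt14 {n nm : ℕ} (hn : 0 < n) (hnm : 0 < nm) (hle : nm ≤ n)
    (Aplus : Matrix (Fin n) (Fin n) ℝ) (hAplus : Aplus.PosDef)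
    (d : Fin nm → ℝ) (hd : ∀ k, 0 < d k)
    (V : Matrix (Fin n) (Fin nm) ℝ) (hVortho : Vᵀ * V = 1)
    (A : Matrix (Fin n) (Fin n) ℝ)
    (hA : A = Aplus - V * Matrix.diagonal d * Vᵀ)
    (hApos : A.PosDef)
    (W : Matrix (Fin n) (Fin nm) ℝ)
    (hW : LinearMap.range W.mulVecLin = LinearMap.range (Aplus⁻¹ * V).mulVecLin)
    (H2 : Matrix (Fin n) (Fin n) ℝ) (hH2 : H2.PosDef)
    (lmin lmax : ℝ) (hlmin : 0 < lmin) (hlml : lmin ≤ lmax)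
    (hspec : ∀ (lam : ℝ) (x : Fin n → ℝ), x ≠ 0 →
      (H2 * Aplus) *ᵥ x = lam • x → lmin ≤ lam ∧ lam ≤ lmax)
    (H3ad : Matrix (Fin n) (Fin n) ℝ)
    (hH3ad : H3ad = H2 + W * (Wᵀ * A * W)⁻¹ * Wᵀ) :
    ∀ (lam : ℝ) (x : Fin n → ℝ), x ≠ 0 → (H3ad * A) *ᵥ x = lam • x →
      min 1 lmin ≤ lam ∧ lam ≤ lmax + 1 := by
  intro lam x hx hlam
  have hdetB : IsUnit Aplus.det := (isUnit_iff_isUnit_det _).mp hAplus.isUnit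
  -- W is injective
  have hinj2 : Function.Injective (Aplus⁻¹ * V).mulVecLin := by
    intro a b hab
    have h1 : (Vᵀ * Aplus) *ᵥ ((Aplus⁻¹ * V) *ᵥ a) = (Vᵀ * Aplus) *ᵥ ((Aplus⁻¹ * V) *ᵥ b) :=
      congrArg _ hab
    have h2 : (Vᵀ * Aplus) * (Aplus⁻¹ * V) = 1 := by
      rw [Matrix.mul_assoc, ← Matrix.mul_assoc Aplus, mul_nonsing_inv _ hdetB, Matrix.one_mul,
        hVortho]
    simpa [mulVec_mulVec, h2] using h1
  have hinj : Function.Injective W.mulVecLin := by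
    rw [← LinearMap.ker_eq_bot, ← Submodule.finrank_eq_zero]
    have h1 := LinearMap.finrank_range_add_finrank_ker W.mulVecLin
    have h2 := LinearMap.finrank_range_of_inj hinj2
    rw [hW, h2] at h1
    omega
  have hWAW : (Wᵀ * A * W).PosDef := by
    simpa using hApos.conjTranspose_mul_mul_same (B := W) hinj
  have hdetW : IsUnit (Wᵀ * A * W).det := (isUnit_iff_isUnit_det _).mp hWAW.isUnit
  have hAt : Aᵀ = A := by
    have h0 := hApos.isHermitian.eq
    rwa [conjTranspose_eq_transpose_of_trivial] at h0
  have hAsymm : ∀ u v : Fin n → ℝ, u ⬝ᵥ (A *ᵥ v) = v ⬝ᵥ (A *ᵥ u) := by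
    intro u v
    rw [dotProduct_mulVec, ← mulVec_transpose, hAt, dotProduct_comm]
  have hAnn : ∀ u : Fin n → ℝ, 0 ≤ u ⬝ᵥ (A *ᵥ u) := fun u => by
    simpa using hApos.posSemidef.dotProduct_mulVec_nonneg u
  have hAx : 0 < x ⬝ᵥ (A *ᵥ x) := by simpa using hApos.dotProduct_mulVec_pos hx
  have hAB : ∀ u : Fin n → ℝ, u ⬝ᵥ (A *ᵥ u) ≤ u ⬝ᵥ (Aplus *ᵥ u) := by
    intro u
    have h1 : 0 ≤ (Vᵀ *ᵥ u) ⬝ᵥ (Matrix.diagonal d *ᵥ (Vᵀ *ᵥ u)) := by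
      simp only [dotProduct, mulVec_diagonal]
      refine Finset.sum_nonneg fun i _ => ?_
      have := mul_nonneg (hd i).le (mul_self_nonneg ((Vᵀ *ᵥ u) i))
      linarith
    have h2 : u ⬝ᵥ ((V * Matrix.diagonal d * Vᵀ) *ᵥ u)
        = (Vᵀ *ᵥ u) ⬝ᵥ (Matrix.diagonal d *ᵥ (Vᵀ *ᵥ u)) := by
      rw [← mulVec_mulVec, ← mulVec_mulVec, dotProduct_mulVec u V, mulVec_transpose V]
    rw [hA, sub_mulVec, dotProduct_sub, h2]
    linarith
  obtain ⟨c, hc⟩ : ∃ c, c = (Wᵀ * A * W)⁻¹ *ᵥ (Wᵀ *ᵥ (A *ᵥ x)) := ⟨_, rfl⟩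
  obtain ⟨r, hr⟩ : ∃ r, r = x - W *ᵥ c := ⟨_, rfl⟩
  have hx' : x = r + W *ᵥ c := by rw [hr]; abel
  have horth : ∀ v, (W *ᵥ v) ⬝ᵥ (A *ᵥ r) = 0 := by
    intro v
    have h1 : Wᵀ *ᵥ (A *ᵥ (W *ᵥ c)) = Wᵀ *ᵥ (A *ᵥ x) := by
      have : Wᵀ *ᵥ (A *ᵥ (W *ᵥ c)) = (Wᵀ * A * W) *ᵥ c := by
        simp [mulVec_mulVec, Matrix.mul_assoc]
      rw [this, hc, mulVec_mulVec, mul_nonsing_inv _ hdetW, one_mulVec]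
    have h2 : Wᵀ *ᵥ (A *ᵥ r) = 0 := by rw [hr, mulVec_sub, mulVec_sub, h1, sub_self]
    rw [dotProduct_comm, dotProduct_mulVec, ← mulVec_transpose, h2, zero_dotProduct]
  obtain ⟨z, hz⟩ : ∃ z, z = Aplus⁻¹ *ᵥ (A *ᵥ x) := ⟨_, rfl⟩
  have hBz : Aplus *ᵥ z = A *ᵥ x := by
    rw [hz, mulVec_mulVec, mul_nonsing_inv _ hdetB, one_mulVec]
  obtain ⟨v, hv⟩ : ∃ v, z = r + W *ᵥ v := by
    have h1 : (Aplus⁻¹ * V) *ᵥ (Matrix.diagonal d *ᵥ (Vᵀ *ᵥ x)) ∈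
        LinearMap.range W.mulVecLin := by
      rw [hW]; exact ⟨_, rfl⟩
    obtain ⟨w, hw⟩ := h1
    rw [mulVecLin_apply] at hw
    have h2 : z = x - W *ᵥ w := by
      rw [hw, hz, hA, sub_mulVec, mulVec_sub, mulVec_mulVec, nonsing_inv_mul _ hdetB, one_mulVec]
      simp [mulVec_mulVec, Matrix.mul_assoc]
    refine ⟨c - w, ?_⟩
    rw [h2, mulVec_sub, hr]; abel
  have heig : H2 *ᵥ (A *ᵥ x) + W *ᵥ c = lam • x := by
    rw [← hlam, hH3ad, hc]
    simp [add_mulVec, Matrix.add_mul, mulVec_mulVec, Matrix.mul_assoc]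
  have hE : (A *ᵥ x) ⬝ᵥ (H2 *ᵥ (A *ᵥ x)) + (W *ᵥ c) ⬝ᵥ (A *ᵥ x) = lam * (x ⬝ᵥ (A *ᵥ x)) := by
    have := congrArg (fun y => (A *ᵥ x) ⬝ᵥ y) heig
    simp only [dotProduct_add, dotProduct_smul, smul_eq_mul] at this
    rw [dotProduct_comm (W *ᵥ c), dotProduct_comm x]
    exact this
  have hb := aux_bounds Aplus H2 hAplus hH2 lmin lmax hspec z
  rw [hBz] at hb
  have hp := hAnn (W *ᵥ c)
  have hrr := hAnn r
  have h1 : (W *ᵥ c) ⬝ᵥ (A *ᵥ x) = (W *ᵥ c) ⬝ᵥ (A *ᵥ (W *ᵥ c)) := by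
    nth_rewrite 1 [hx']
    rw [mulVec_add, dotProduct_add, horth, zero_add]
  have h2 : x ⬝ᵥ (A *ᵥ x) = r ⬝ᵥ (A *ᵥ r) + (W *ᵥ c) ⬝ᵥ (A *ᵥ (W *ᵥ c)) := by
    rw [hx', mulVec_add, dotProduct_add, add_dotProduct, add_dotProduct, horth,
      hAsymm r (W *ᵥ c), horth]
    ring
  have h3 : z ⬝ᵥ (A *ᵥ z) = r ⬝ᵥ (A *ᵥ r) + (W *ᵥ v) ⬝ᵥ (A *ᵥ (W *ᵥ v)) := by
    rw [hv, mulVec_add, dotProduct_add, add_dotProduct, add_dotProduct, horth,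
      hAsymm r (W *ᵥ v), horth]
    ring
  have h4 := hAnn (W *ᵥ v)
  have h5 := hAB z
  rw [hBz] at h5
  have h6 : 0 ≤ x ⬝ᵥ (A *ᵥ x) - 2 * (z ⬝ᵥ (A *ᵥ x)) + z ⬝ᵥ (A *ᵥ z) := by
    have := hAnn (x - z)
    rw [mulVec_sub, dotProduct_sub, sub_dotProduct, sub_dotProduct, hAsymm x z] at this
    linarith
  obtain ⟨hb1, hb2⟩ := hb
  rw [h1] at hE
  constructor
  · have h7 : lmin * (r ⬝ᵥ (A *ᵥ r)) ≤ lmin * (z ⬝ᵥ (A *ᵥ x)) :=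
      mul_le_mul_of_nonneg_left (by linarith) hlmin.le
    have h8 := mul_le_mul_of_nonneg_right (min_le_right 1 lmin) hrr
    have h9 := mul_le_mul_of_nonneg_right (min_le_left 1 lmin) hp
    refine le_of_mul_le_mul_right ?_ hAx
    rw [← hE, h2, mul_add]
    linarith
  · have h7 : lmax * (z ⬝ᵥ (A *ᵥ x)) ≤ lmax * (x ⬝ᵥ (A *ᵥ x)) :=
      mul_le_mul_of_nonneg_left (by linarith) (by linarith)
    refine le_of_mul_le_mul_right ?_ hAx
    rw [← hE, add_mul]
    linarith
end
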